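/- Let k_P > 0 and k_D > 0 be scalar gains, let R_d ∈ SO(3) be a constant desired attitude with desired angular velocity ω_d = 0, and consider the closed-loop attitude dynamics on SO(3) × ℝ³ given by Ṙ(t) = S(ω(t)) R(t) and ω̇(t) = R(t) · ᴮω̇*(t), where ᴮω(t) := R(t)ᵀ ω(t) and ᴮω̇* := −k_P k_D skew(R_dᵀ R)∨ − k_D ᴮω − k_P skew(R_dᵀ R S(ᴮω))∨. Then the equilibrium (R, ω) = (R_d, 0) is quasi-globally asymptotically stable: (i) it is Lyapunov stable (for every neighborhood U of (R_d, 0) there is a neighborhood V of (R_d, 0) such that every solution starting in V remains in U for all t ≥ 0), and (ii) there exists a closed set N ⊆ SO(3) × ℝ³, with empty interior and of measure zero with respect to the product of the Haar measure on SO(3) and Lebesgue measure on ℝ³, such that every solution with initial condition (R(0), ω(0)) ∉ N satisfies R(t) → R_d and ω(t) → 0 as t → ∞. -/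

import Mathlib

open Matrix MeasureTheory Filter Topology

noncomputable section

attribute [local instance] Matrix.normedAddCommGroup Matrix.normedSpace

/-- The space of real 3×3 matrices. -/
abbrev M3 := Matrix (Fin 3) (Fin 3) ℝ

/-- Vectors in ℝ³. -/
abbrev V3 := Fin 3 → ℝ

local instance : MeasurableSpace M3 :=
  (inferInstance : MeasurableSpace (Fin 3 → Fin 3 → ℝ))

/-- The skew-symmetric matrix `S a` associated with the cross product,
i.e. `S a *ᵥ b = a × b`. -/
def S (a : V3) : M3 :=
  !![0, -a 2, a 1;
     a 2, 0, -a 0;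
     -a 1, a 0, 0]

/-- The vee operator, inverse of `S` on skew-symmetric matrices. -/
def vee (A : M3) : V3 := ![A 2 1, A 0 2, A 1 0]

/-- `skew(A) = ½(A − Aᵀ)`. -/
def skewPart (A : M3) : M3 := (1 / 2 : ℝ) • (A - Aᵀ)

/-- SO(3): real 3×3 matrices `R` with `Rᵀ * R = 1` and `det R = 1`. -/
def SO3 : Set M3 := {R | Rᵀ * R = 1 ∧ R.det = 1}

/-- The body-frame commanded angular acceleration for a constant desired attitude `R_d`
with desired angular velocity `ω_d = 0`:
`ᴮω̇* = −k_P k_D skew(R_dᵀ R)∨ − k_D ᴮω − k_P skew(R_dᵀ R S(ᴮω))∨`,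
where `ᴮω = Rᵀ ω`. -/
def bodyCmd (kP kD : ℝ) (Rd R : M3) (ω : V3) : V3 :=
  (-(kP * kD)) • vee (skewPart (Rdᵀ * R))
    - kD • (Rᵀ *ᵥ ω)
    - kP • vee (skewPart (Rdᵀ * R * S (Rᵀ *ᵥ ω)))

/-- `(R, ω)` is a (forward-time) solution of the closed-loop attitude dynamics
`Ṙ(t) = S(ω(t)) R(t)`, `ω̇(t) = R(t) ᴮω̇*(t)`. -/
def IsClosedLoopSolution (kP kD : ℝ) (Rd : M3) (R : ℝ → M3) (ω : ℝ → V3) : Prop :=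
  (∀ t : ℝ, 0 ≤ t → HasDerivAt R (S (ω t) * R t) t) ∧
  (∀ t : ℝ, 0 ≤ t → HasDerivAt ω (R t *ᵥ bodyCmd kP kD Rd (R t) (ω t)) t)

/-- `μ` is the (normalized, left-invariant) Haar measure of the compact group SO(3),
viewed as a measure on the ambient matrix space carried by the set `SO3`. -/
def IsHaarOnSO3 (μ : Measure M3) : Prop :=
  μ SO3 = 1 ∧ μ SO3ᶜ = 0 ∧
  ∀ Q ∈ SO3, ∀ s : Set M3, MeasurableSet s → μ ((fun R => Q * R) ⁻¹' s) = μ s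

def rotq (a b c d : ℝ) : M3 :=
  !![a^2+b^2-c^2-d^2, 2*(b*c-a*d), 2*(b*d+a*c);
     2*(b*c+a*d), a^2-b^2+c^2-d^2, 2*(c*d-a*b);
     2*(b*d-a*c), 2*(c*d+a*b), a^2-b^2-c^2+d^2]

theorem rank_one_aux (k : Fin 4 → Fin 4 → ℝ)
    (hk : ∀ i j l, k i j * k i l = k i i * k j l) (htr : 0 < ∑ i, k i i) :
    ∃ q : Fin 4 → ℝ, ∀ j l, k j l = q j * q l := by
  obtain ⟨i, -, hi⟩ : ∃ i ∈ Finset.univ, 0 < k i i := by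
    by_contra! h
    exact absurd (Finset.sum_nonpos h) (not_le.mpr htr)
  refine ⟨fun j => k i j / Real.sqrt (k i i), fun j l => ?_⟩
  have h1 : Real.sqrt (k i i) * Real.sqrt (k i i) = k i i := Real.mul_self_sqrt hi.le
  rw [div_mul_div_comm, h1, hk i j l]
  field_simp

theorem SO3_adj {R : M3} (hR : R ∈ SO3) : R.adjugate = Rᵀ := by
  have h : R.adjugate = (Rᵀ * R) * R.adjugate := by rw [hR.1, one_mul]
  rw [h, mul_assoc, Matrix.mul_adjugate, hR.2, one_smul, mul_one]

theorem SO3_mul_transpose {R : M3} (hR : R ∈ SO3) : R * Rᵀ = 1 :=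
  mul_eq_one_comm.mp hR.1

theorem SO3_cof {R : M3} (hR : R ∈ SO3) :
    R 1 1 * R 2 2 - R 1 2 * R 2 1 = R 0 0 ∧
    R 1 2 * R 2 0 - R 1 0 * R 2 2 = R 0 1 ∧
    R 1 0 * R 2 1 - R 1 1 * R 2 0 = R 0 2 ∧
    R 0 2 * R 2 1 - R 0 1 * R 2 2 = R 1 0 ∧
    R 0 0 * R 2 2 - R 0 2 * R 2 0 = R 1 1 ∧
    R 0 1 * R 2 0 - R 0 0 * R 2 1 = R 1 2 ∧
    R 0 1 * R 1 2 - R 0 2 * R 1 1 = R 2 0 ∧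
    R 0 2 * R 1 0 - R 0 0 * R 1 2 = R 2 1 ∧
    R 0 0 * R 1 1 - R 0 1 * R 1 0 = R 2 2 := by
  have h := SO3_adj hR
  rw [Matrix.adjugate_fin_three] at h
  have e := fun i j => congrFun (congrFun h i) j
  have e00 := e 0 0
  have e01 := e 0 1
  have e02 := e 0 2
  have e10 := e 1 0
  have e11 := e 1 1
  have e12 := e 1 2
  have e20 := e 2 0
  have e21 := e 2 1
  have e22 := e 2 2
  simp [Matrix.transpose_apply] at e00 e01 e02 e10 e11 e12 e20 e21 e22
  refine ⟨?_, ?_, ?_, ?_, ?_, ?_, ?_, ?_, ?_⟩ <;> linarith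

theorem SO3_rows {R : M3} (hR : R ∈ SO3) (i j : Fin 3) :
    R i 0 * R j 0 + R i 1 * R j 1 + R i 2 * R j 2 = if i = j then 1 else 0 := by
  have h := congrFun (congrFun (SO3_mul_transpose hR) i) j
  simpa [Matrix.mul_apply, Fin.sum_univ_three, Matrix.one_apply] using h

theorem SO3_cols {R : M3} (hR : R ∈ SO3) (i j : Fin 3) :
    R 0 i * R 0 j + R 1 i * R 1 j + R 2 i * R 2 j = if i = j then 1 else 0 := by
  have h := congrFun (congrFun hR.1 i) j
  simpa [Matrix.mul_apply, Fin.sum_univ_three, Matrix.one_apply] using h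

theorem SO3_quat {R : M3} (hR : R ∈ SO3) :
    ∃ a b c d : ℝ, a^2+b^2+c^2+d^2 = 1 ∧ R = rotq a b c d := by
  obtain ⟨c1, c2, c3, c4, c5, c6, c7, c8, c9⟩ := SO3_cof hR
  have r00 := SO3_rows hR 0 0
  have r01 := SO3_rows hR 0 1
  have r02 := SO3_rows hR 0 2
  have r11 := SO3_rows hR 1 1
  have r12 := SO3_rows hR 1 2
  have r22 := SO3_rows hR 2 2
  have s00 := SO3_cols hR 0 0
  have s01 := SO3_cols hR 0 1
  have s02 := SO3_cols hR 0 2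
  have s11 := SO3_cols hR 1 1
  have s12 := SO3_cols hR 1 2
  have s22 := SO3_cols hR 2 2
  simp at r00 r01 r02 r11 r12 r22 s00 s01 s02 s11 s12 s22
  obtain ⟨q, hq⟩ := rank_one_aux
    ![![1 + R 0 0 + R 1 1 + R 2 2, R 2 1 - R 1 2, R 0 2 - R 2 0, R 1 0 - R 0 1],
      ![R 2 1 - R 1 2, 1 + R 0 0 - R 1 1 - R 2 2, R 0 1 + R 1 0, R 0 2 + R 2 0],
      ![R 0 2 - R 2 0, R 0 1 + R 1 0, 1 - R 0 0 + R 1 1 - R 2 2, R 1 2 + R 2 1],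
      ![R 1 0 - R 0 1, R 0 2 + R 2 0, R 1 2 + R 2 1, 1 - R 0 0 - R 1 1 + R 2 2]] (by
      intro i j l
      fin_cases i <;> fin_cases j <;> fin_cases l <;> simp <;> linarith)
    (by simp [Fin.sum_univ_four]; linarith)
  have h00 := hq 0 0
  have h01 := hq 0 1
  have h02 := hq 0 2
  have h03 := hq 0 3
  have h11 := hq 1 1
  have h12 := hq 1 2
  have h13 := hq 1 3
  have h22 := hq 2 2
  have h23 := hq 2 3
  have h33 := hq 3 3
  simp at h00 h01 h02 h03 h11 h12 h13 h22 h23 h33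
  refine ⟨q 0 / 2, q 1 / 2, q 2 / 2, q 3 / 2, by linarith, ?_⟩
  ext i j
  fin_cases i <;> fin_cases j <;> simp [rotq] <;> linarith

theorem rotq_mem {a b c d : ℝ} (h : a^2+b^2+c^2+d^2 = 1) : rotq a b c d ∈ SO3 := by
  constructor
  · ext i j
    fin_cases i <;> fin_cases j <;>
      simp [rotq, Matrix.mul_apply, Fin.sum_univ_three] <;>
      first
      | ring1
      | linear_combination (a^2+b^2+c^2+d^2 + 1) * h
  · rw [Matrix.det_fin_three]
    simp [rotq]
    linear_combination ((a^2+b^2+c^2+d^2)^2 + (a^2+b^2+c^2+d^2) + 1) * h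

theorem SO3_mul {A B : M3} (hA : A ∈ SO3) (hB : B ∈ SO3) : A * B ∈ SO3 := by
  refine ⟨?_, by rw [Matrix.det_mul, hA.2, hB.2, one_mul]⟩
  rw [Matrix.transpose_mul, Matrix.mul_assoc, ← Matrix.mul_assoc Aᵀ, hA.1, Matrix.one_mul, hB.1]

theorem SO3_transpose {A : M3} (hA : A ∈ SO3) : Aᵀ ∈ SO3 :=
  ⟨by rw [Matrix.transpose_transpose]; exact SO3_mul_transpose hA,
    by rw [Matrix.det_transpose]; exact hA.2⟩

/-- quaternion product and rotation -/
theorem rotq_mul (a b c d x y z w : ℝ) : rotq a b c d * rotq x y z w =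
    rotq (a*x-b*y-c*z-d*w) (a*y+b*x+c*w-d*z) (a*z-b*w+c*x+d*y) (a*w+b*z-c*y+d*x) := by
  ext i j
  fin_cases i <;> fin_cases j <;>
    simp [rotq, Matrix.mul_apply, Fin.sum_univ_three] <;> ring

theorem S_mul_R {R : M3} (hR : R ∈ SO3) (ω : V3) : S ω * R = R * S (Rᵀ *ᵥ ω) := by
  obtain ⟨c1, c2, c3, c4, c5, c6, c7, c8, c9⟩ := SO3_cof hR
  ext i j
  fin_cases i <;> fin_cases j <;>
    simp [S, Matrix.mul_apply, Fin.sum_univ_three, Matrix.mulVec, dotProduct] 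
  · linear_combination (-ω 1) * c7 + ω 2 * c4
  · linear_combination (-ω 1) * c8 + ω 2 * c5
  · linear_combination (-ω 1) * c9 + ω 2 * c6
  · linear_combination (-ω 2) * c1 + ω 0 * c7
  · linear_combination (-ω 2) * c2 + ω 0 * c8
  · linear_combination (-ω 2) * c3 + ω 0 * c9
  · linear_combination ω 1 * c1 - ω 0 * c4
  · linear_combination ω 1 * c2 - ω 0 * c5
  · linear_combination ω 1 * c3 - ω 0 * c6

def fser (c : ℕ → ℝ) (u : ℝ) : ℝ := ∑' n, c n * u ^ n

def dser (c : ℕ → ℝ) (n : ℕ) : ℝ := (n + 1 : ℝ) * c (n + 1)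

def EntB (c : ℕ → ℝ) : Prop := ∃ M C : ℝ, ∀ n, |c n| ≤ M * (C ^ n / (n.factorial : ℝ))

theorem EntB.dser {c : ℕ → ℝ} (h : EntB c) : EntB (dser c) := by
  obtain ⟨M, C, h⟩ := h
  refine ⟨M * C, C, fun n => ?_⟩
  have h1 := h (n + 1)
  have hf : ((n + 1).factorial : ℝ) = (n + 1 : ℝ) * (n.factorial : ℝ) := by
    rw [Nat.factorial_succ]; push_cast; ring
  have hp : (0 : ℝ) < n.factorial := by positivity
  unfold _root_.dser
  rw [abs_mul, abs_of_pos (by positivity : (0 : ℝ) < (n + 1 : ℝ))]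
  calc (n + 1 : ℝ) * |c (n + 1)| ≤ (n + 1 : ℝ) * (M * (C ^ (n + 1) / ((n + 1).factorial : ℝ))) := by
        gcongr
    _ = M * C * (C ^ n / (n.factorial : ℝ)) := by
        rw [hf]; field_simp; ring

theorem EntB.summable {c : ℕ → ℝ} (h : EntB c) (u : ℝ) : Summable fun n => c n * u ^ n := by
  obtain ⟨M, C, h⟩ := h
  refine Summable.of_norm_bounded (g := fun n => M * ((C * |u|) ^ n / (n.factorial : ℝ)))
    ((Real.summable_pow_div_factorial (C * |u|)).mul_left M) (fun n => ?_)
  rw [norm_mul, norm_pow, Real.norm_eq_abs, Real.norm_eq_abs]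
  calc |c n| * |u| ^ n ≤ M * (C ^ n / (n.factorial : ℝ)) * |u| ^ n := by gcongr; exact h n
    _ = _ := by rw [mul_pow]; ring

theorem fser_hasDerivAt {c : ℕ → ℝ} (h : EntB c) (u : ℝ) :
    HasDerivAt (fser c) (fser (dser c) u) u := by
  have hd := h.dser
  obtain ⟨M, C, hb⟩ := hd
  set r : ℝ := |u| + 1 with hr
  have hr0 : 0 < r := by positivity
  have key := hasDerivAt_tsum_of_isPreconnected (𝕜 := ℝ) (g := fun n y => c n * y ^ n)
    (g' := fun n y => c n * ((n : ℝ) * y ^ (n - 1)))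
    (u := fun n => |c n| * ((n : ℝ) * r ^ (n - 1))) (t := Metric.ball 0 r) (y₀ := 0) (y := u)
    ?_ Metric.isOpen_ball (convex_ball (0:ℝ) r).isPreconnected
    (fun n y _ => (hasDerivAt_pow n y).const_mul (c n)) ?_ (by simpa using hr0)
    (h.summable 0) (by simp [hr])
  · have e : (∑' n, c n * ((n : ℝ) * u ^ (n - 1))) = fser (dser c) u := by
      have hs : Summable fun n => dser c n * u ^ n := h.dser.summable u
      rw [Summable.tsum_eq_zero_add]
      · simp only [Nat.cast_zero, zero_mul, mul_zero, zero_add, fser]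
        refine tsum_congr fun n => ?_
        simp only [dser, Nat.add_sub_cancel]; push_cast; ring
      · rw [← summable_nat_add_iff 1]
        refine hs.congr fun n => ?_
        simp only [dser, Nat.add_sub_cancel]; push_cast; ring
    rw [← e]
    exact key
  · rw [← summable_nat_add_iff 1]
    refine Summable.of_nonneg_of_le (fun n => by positivity) (fun n => ?_)
      ((Real.summable_pow_div_factorial (C * r)).mul_left M)
    have := hb n
    simp only [dser, abs_mul, abs_of_pos (by positivity : (0 : ℝ) < (n + 1 : ℝ))] at this
    calc |c (n + 1)| * (((n + 1 : ℕ) : ℝ) * r ^ (n + 1 - 1))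
        = ((n + 1 : ℝ) * |c (n + 1)|) * r ^ n := by
          simp only [Nat.add_sub_cancel]; push_cast; ring
      _ ≤ (M * (C ^ n / (n.factorial : ℝ))) * r ^ n := by gcongr
      _ = _ := by rw [mul_pow]; ring
  · intro n y hy
    have hy' : |y| ≤ r := by
      have : |y| < r := by simpa using hy
      exact this.le
    simp only [norm_mul, norm_pow, Real.norm_eq_abs]
    rw [abs_of_nonneg (Nat.cast_nonneg n : (0:ℝ) ≤ n)]
    gcongr

def ccoef (a b : ℝ) : ℕ → ℝ
  | 0 => 1
  | n + 1 => -b / ((n + 1 : ℝ) * (n + a)) * ccoef a b n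

theorem ccoef_ent {a b : ℝ} (ha : 0 < a) : EntB (ccoef a b) := by
  refine ⟨1, |b| / a, fun n => ?_⟩
  induction n with
  | zero => simp [ccoef]
  | succ n ih =>
    have hf : ((n + 1).factorial : ℝ) = (n + 1 : ℝ) * (n.factorial : ℝ) := by
      rw [Nat.factorial_succ]; push_cast; ring
    rw [ccoef, abs_mul, abs_div, abs_neg, abs_of_pos (by positivity : (0:ℝ) < (n + 1 : ℝ) * (n + a))]
    calc |b| / ((n + 1 : ℝ) * (n + a)) * |ccoef a b n|
        ≤ |b| / ((n + 1 : ℝ) * a) * (1 * ((|b| / a) ^ n / (n.factorial : ℝ))) := by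
          gcongr
          have : (0:ℝ) ≤ n := Nat.cast_nonneg n
          linarith
      _ = _ := by rw [hf, pow_succ]; field_simp

theorem ccoef_ode {a b : ℝ} (ha : 0 < a) (u : ℝ) :
    u * fser (dser (dser (ccoef a b))) u + a * fser (dser (ccoef a b)) u
      + b * fser (ccoef a b) u = 0 := by
  have h0 := ccoef_ent (b := b) ha
  have s0 := (h0.summable u).hasSum
  have s1 := (h0.dser.summable u).hasSum
  have s2 : HasSum (fun n : ℕ => (n : ℝ) * dser (ccoef a b) n * u ^ n)
      (u * fser (dser (dser (ccoef a b))) u) := by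
    rw [← hasSum_nat_add_iff' 1]
    have := ((h0.dser.dser.summable u).hasSum).mul_left u
    simp only [Finset.range_one, Finset.sum_singleton, Nat.cast_zero, zero_mul, sub_zero]
    have e : (fun n : ℕ => ((n + 1 : ℕ) : ℝ) * dser (ccoef a b) (n + 1) * u ^ (n + 1))
        = fun n => u * (dser (dser (ccoef a b)) n * u ^ n) := by
      funext n
      simp only [dser]; push_cast; ring
    rw [e]
    exact this
  have := (s2.add (s1.mul_left a)).add (s0.mul_left b)
  refine this.unique ?_
  convert (hasSum_zero : HasSum (fun _ : ℕ => (0:ℝ)) 0) using 2 with n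
  simp only [dser, ccoef]
  have : (n : ℝ) + a ≠ 0 := by positivity
  field_simp
  ring

theorem exists_fg {kP kD : ℝ} (hkP : 0 < kP) (hkD : 0 < kD) :
    ∃ f g : ℝ → ℝ, f 0 = 1 ∧ (∀ u, HasDerivAt f (g u / (4 * kD)) u) ∧
      ∀ u, ∃ g', HasDerivAt g g' u ∧ -2 * kD * u * g' = f u / 2 + (kD + kP) * g u := by
  have ha : 0 < (kD + kP) / (2 * kD) := by positivity
  set c := ccoef ((kD + kP) / (2 * kD)) (1 / (16 * kD ^ 2)) with hc
  have h0 : EntB c := ccoef_ent ha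
  refine ⟨fser c, fun u => 4 * kD * fser (dser c) u, ?_, fun u => ?_, fun u => ?_⟩
  · rw [fser, tsum_eq_single 0]
    · simp [hc, ccoef]
    · intro n hn; simp [hn]
  · have := fser_hasDerivAt h0 u
    convert this using 1
    field_simp
  · refine ⟨4 * kD * fser (dser (dser c)) u, (fser_hasDerivAt h0.dser u).const_mul _, ?_⟩
    have := ccoef_ode (b := 1 / (16 * kD ^ 2)) ha u
    rw [← hc] at this
    have h2 : u * fser (dser (dser c)) u = - ((kD + kP) / (2 * kD) * fser (dser c) u
      + 1 / (16 * kD ^ 2) * fser c u) := by linarith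
    have h3 : -2 * kD * u * (4 * kD * fser (dser (dser c)) u)
      = -8 * kD ^ 2 * (u * fser (dser (dser c)) u) := by ring
    rw [h3, h2]
    field_simp
    ring

theorem const_of_deriv_zero {h : ℝ → ℝ} (hd : ∀ t, 0 ≤ t → HasDerivAt h 0 t) (t : ℝ)
    (ht : 0 ≤ t) : h t = h 0 :=
  constant_of_has_deriv_right_zero (a := 0) (b := t)
    (fun x hx => (hd x hx.1).continuousAt.continuousWithinAt)
    (fun x hx => (hd x hx.1).hasDerivWithinAt) t ⟨ht, le_rfl⟩

theorem sol_entry {kP kD : ℝ} {Rd : M3} {R : ℝ → M3} {ω : ℝ → V3}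
    (h : IsClosedLoopSolution kP kD Rd R ω) {t : ℝ} (ht : 0 ≤ t) (i j : Fin 3) :
    HasDerivAt (fun t => R t i j) ((S (ω t) * R t) i j) t :=
  hasDerivAt_pi.1 (hasDerivAt_pi.1 (h.1 t ht) i) j

theorem sol_SO3 {kP kD : ℝ} {Rd : M3} {R : ℝ → M3} {ω : ℝ → V3}
    (h : IsClosedLoopSolution kP kD Rd R ω) (h0 : R 0 ∈ SO3) {t : ℝ} (ht : 0 ≤ t) :
    R t ∈ SO3 := by
  constructor
  · rw [← h0.1]
    ext i j
    refine const_of_deriv_zero (h := fun t => ((R t)ᵀ * R t) i j) (fun s hs => ?_) t ht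
    simp only [Matrix.mul_apply, Fin.sum_univ_three, Matrix.transpose_apply]
    have e := fun i j => sol_entry h hs i j
    refine HasDerivAt.congr_deriv ((((e 0 i).mul (e 0 j)).add ((e 1 i).mul (e 1 j))).add ((e 2 i).mul (e 2 j))) ?_
    simp [S, Matrix.mul_apply, Fin.sum_univ_three]
    ring
  · rw [← h0.2]
    refine const_of_deriv_zero (h := fun t => (R t).det) (fun s hs => ?_) t ht
    simp only [Matrix.det_fin_three]
    have e := fun i j => sol_entry h hs i j
    refine HasDerivAt.congr_deriv (((((((((e 0 0).mul (e 1 1)).mul (e 2 2)).sub (((e 0 0).mul (e 1 2)).mul (e 2 1))).sub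
      (((e 0 1).mul (e 1 0)).mul (e 2 2))).add (((e 0 1).mul (e 1 2)).mul (e 2 0))).add
      (((e 0 2).mul (e 1 0)).mul (e 2 1))).sub (((e 0 2).mul (e 1 1)).mul (e 2 0)))) ?_
    simp [S, Matrix.mul_apply, Fin.sum_univ_three]
    ring

def zvec (kP : ℝ) (Rd R : M3) (ω : V3) : V3 :=
  Rᵀ *ᵥ ω + kP • vee (skewPart (Rdᵀ * R))

theorem E_entry {kP kD : ℝ} {Rd : M3} {R : ℝ → M3} {ω : ℝ → V3}
    (h : IsClosedLoopSolution kP kD Rd R ω) (h0 : R 0 ∈ SO3) {t : ℝ} (ht : 0 ≤ t) (i j : Fin 3) :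
    HasDerivAt (fun t => (Rdᵀ * R t) i j) ((Rdᵀ * R t * S ((R t)ᵀ *ᵥ ω t)) i j) t := by
  rw [Matrix.mul_assoc, ← S_mul_R (sol_SO3 h h0 ht)]
  exact HasDerivAt.fun_sum (u := Finset.univ) fun k _ => (sol_entry h ht k j).const_mul (Rdᵀ i k)

theorem veeskew_deriv {E : ℝ → M3} {E' : M3} {t : ℝ}
    (h : ∀ i j, HasDerivAt (fun t => E t i j) (E' i j) t) (i : Fin 3) :
    HasDerivAt (fun t => vee (skewPart (E t)) i) (vee (skewPart E') i) t := by
  fin_cases i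
  · simpa [vee, skewPart] using ((h 2 1).sub (h 1 2)).const_mul (2⁻¹ : ℝ)
  · simpa [vee, skewPart] using ((h 0 2).sub (h 2 0)).const_mul (2⁻¹ : ℝ)
  · simpa [vee, skewPart] using ((h 1 0).sub (h 0 1)).const_mul (2⁻¹ : ℝ)

theorem b_entry {kP kD : ℝ} {Rd : M3} {R : ℝ → M3} {ω : ℝ → V3}
    (h : IsClosedLoopSolution kP kD Rd R ω) (h0 : R 0 ∈ SO3) {t : ℝ} (ht : 0 ≤ t) (i : Fin 3) :
    HasDerivAt (fun t => ((R t)ᵀ *ᵥ ω t) i) (bodyCmd kP kD Rd (R t) (ω t) i) t := by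
  have e := fun i j => sol_entry h ht i j
  have w := fun i => hasDerivAt_pi.1 (h.2 t ht) i
  have hc : (R t)ᵀ *ᵥ (R t *ᵥ bodyCmd kP kD Rd (R t) (ω t)) = bodyCmd kP kD Rd (R t) (ω t) := by
    rw [Matrix.mulVec_mulVec, (sol_SO3 h h0 ht).1, Matrix.one_mulVec]
  have hi := congrFun hc i
  rw [← hi]
  generalize R t *ᵥ bodyCmd kP kD Rd (R t) (ω t) = c at *
  simp only [Matrix.mulVec, dotProduct, Fin.sum_univ_three, Matrix.transpose_apply]
  refine HasDerivAt.congr_deriv ((((e 0 i).mul (w 0)).add ((e 1 i).mul (w 1))).add ((e 2 i).mul (w 2))) ?_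
  simp [S, Matrix.mul_apply, Fin.sum_univ_three]
  ring

theorem z_entry {kP kD : ℝ} {Rd : M3} {R : ℝ → M3} {ω : ℝ → V3}
    (h : IsClosedLoopSolution kP kD Rd R ω) (h0 : R 0 ∈ SO3) {t : ℝ} (ht : 0 ≤ t) (i : Fin 3) :
    HasDerivAt (fun t => zvec kP Rd (R t) (ω t) i) (-kD * zvec kP Rd (R t) (ω t) i) t := by
  have h1 := b_entry h h0 ht i
  have h2 := veeskew_deriv (fun i j => E_entry h h0 ht i j) i
  refine HasDerivAt.congr_deriv (h1.add (h2.const_mul kP)) ?_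
  simp [zvec, bodyCmd]
  ring

theorem z_exp {kP kD : ℝ} {Rd : M3} {R : ℝ → M3} {ω : ℝ → V3}
    (h : IsClosedLoopSolution kP kD Rd R ω) (h0 : R 0 ∈ SO3) {t : ℝ} (ht : 0 ≤ t) (i : Fin 3) :
    zvec kP Rd (R t) (ω t) i = Real.exp (-kD * t) * zvec kP Rd (R 0) (ω 0) i := by
  have := const_of_deriv_zero (h := fun t => Real.exp (kD * t) * zvec kP Rd (R t) (ω t) i)
    (fun s hs => by
      have h1 : HasDerivAt (fun s : ℝ => Real.exp (kD * s)) (Real.exp (kD * s) * (kD * 1)) s :=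
        ((hasDerivAt_id s).const_mul kD).exp
      refine HasDerivAt.congr_deriv (h1.mul (z_entry h h0 hs i)) ?_
      ring) t ht
  simp only [mul_zero, Real.exp_zero, one_mul] at this
  rw [← this, ← mul_assoc, ← Real.exp_add]
  simp

def tau (E : M3) : ℝ := (1 + E 0 0 + E 1 1 + E 2 2) / 4
def mm (E : M3) (z : V3) : ℝ :=
  vee (skewPart E) 0 * z 0 + vee (skewPart E) 1 * z 1 + vee (skewPart E) 2 * z 2
def nn (E : M3) (z : V3) : ℝ :=
  (z 0 * z 0 * (1 + E 0 0 - E 1 1 - E 2 2) + z 1 * z 1 * (1 - E 0 0 + E 1 1 - E 2 2)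
    + z 2 * z 2 * (1 - E 0 0 - E 1 1 + E 2 2) + 2 * (z 0 * z 1 * (E 0 1 + E 1 0))
    + 2 * (z 0 * z 2 * (E 0 2 + E 2 0)) + 2 * (z 1 * z 2 * (E 1 2 + E 2 1))) / 4
def uu (z : V3) : ℝ := z 0 * z 0 + z 1 * z 1 + z 2 * z 2
def WW (f g : ℝ → ℝ) (E : M3) (z : V3) : ℝ :=
  f (uu z) ^ 2 * tau E + f (uu z) * g (uu z) * mm E z + g (uu z) ^ 2 * nn E z

theorem tau_rotq {a b c d : ℝ} (h : a^2+b^2+c^2+d^2 = 1) : tau (rotq a b c d) = a^2 := by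
  simp [tau, rotq]; linear_combination (-1/4) * h
theorem mm_rotq {a b c d : ℝ} (z : V3) :
    mm (rotq a b c d) z = 2 * a * (b * z 0 + c * z 1 + d * z 2) := by
  simp [mm, rotq, vee, skewPart]; ring
theorem nn_rotq {a b c d : ℝ} (h : a^2+b^2+c^2+d^2 = 1) (z : V3) :
    nn (rotq a b c d) z = (b * z 0 + c * z 1 + d * z 2)^2 := by
  simp [nn, rotq]; linear_combination (-1/4 * (z 0^2 + z 1^2 + z 2^2)) * h

theorem WW_rotq {f g : ℝ → ℝ} {a b c d : ℝ} (h : a^2+b^2+c^2+d^2 = 1) (z : V3) :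
    WW f g (rotq a b c d) z
      = (f (uu z) * a + g (uu z) * (b * z 0 + c * z 1 + d * z 2)) ^ 2 := by
  rw [WW, tau_rotq h, mm_rotq, nn_rotq h]; ring

theorem WW_deriv {kP kD : ℝ} {f g : ℝ → ℝ} (hkD : 0 < kD)
    (hf : ∀ u, HasDerivAt f (g u / (4 * kD)) u)
    (hg : ∀ u, ∃ g', HasDerivAt g g' u ∧ -2 * kD * u * g' = f u / 2 + (kD + kP) * g u)
    {E : ℝ → M3} {z : ℝ → V3} {t : ℝ} (hE : E t ∈ SO3)
    (dE : ∀ i j, HasDerivAt (fun t => E t i j)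
      ((E t * S (z t - kP • vee (skewPart (E t)))) i j) t)
    (dz : ∀ i, HasDerivAt (fun t => z t i) (-kD * z t i) t) :
    HasDerivAt (fun t => WW f g (E t) (z t))
      (2 * kP * (1 - tau (E t)) * WW f g (E t) (z t)) t := by
  obtain ⟨a, b, c, d, hq, hEq⟩ := SO3_quat hE
  obtain ⟨g', hg', hgo⟩ := hg (uu (z t))
  set σ : ℝ := b * z t 0 + c * z t 1 + d * z t 2 with hσ
  set ad : ℝ := -(1/2) * σ + kP * a * (1 - a^2) with had
  set σd : ℝ := -kD * σ + (1/2) * a * uu (z t) - kP * a^2 * σ with hσd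
  have du : HasDerivAt (fun t => uu (z t)) (-2 * kD * uu (z t)) t := by
    refine HasDerivAt.congr_deriv ((((dz 0).mul (dz 0)).add ((dz 1).mul (dz 1))).add ((dz 2).mul (dz 2))) ?_
    simp only [uu]; ring
  have dτ : HasDerivAt (fun t => tau (E t)) (2 * a * ad) t := by
    refine HasDerivAt.congr_deriv (((((dE 0 0).const_add 1).add (dE 1 1)).add (dE 2 2)).div_const 4) ?_
    rw [had, hσ, hEq]
    simp [S, rotq, vee, skewPart, Matrix.mul_apply, Fin.sum_univ_three]
    linear_combination (2*kP*a^2) * hq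
  have dv := veeskew_deriv dE
  have dm : HasDerivAt (fun t => mm (E t) (z t)) (2 * (ad * σ + a * σd)) t := by
    refine HasDerivAt.congr_deriv ((((dv 0).mul (dz 0)).add ((dv 1).mul (dz 1))).add ((dv 2).mul (dz 2))) ?_
    rw [had, hσd, hσ, hEq]
    simp [S, rotq, vee, skewPart, uu]
    linear_combination (2*kP*a*(b * z t 0 + c * z t 1 + d * z t 2)) * hq
  have dn : HasDerivAt (fun t => nn (E t) (z t)) (2 * σ * σd) t := by
    refine HasDerivAt.congr_deriv (((((((((dz 0).mul (dz 0)).mul ((((dE 0 0).const_add 1).sub (dE 1 1)).sub (dE 2 2))).add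
      (((dz 1).mul (dz 1)).mul ((((dE 0 0).const_sub 1).add (dE 1 1)).sub (dE 2 2)))).add
      (((dz 2).mul (dz 2)).mul ((((dE 0 0).const_sub 1).sub (dE 1 1)).add (dE 2 2)))).add
      ((((dz 0).mul (dz 1)).mul ((dE 0 1).add (dE 1 0))).const_mul 2)).add
      ((((dz 0).mul (dz 2)).mul ((dE 0 2).add (dE 2 0))).const_mul 2)).add
      ((((dz 1).mul (dz 2)).mul ((dE 1 2).add (dE 2 1))).const_mul 2)).div_const 4) ?_
    rw [hσd, hσ]
    simp [hEq, S, rotq, vee, skewPart, Matrix.mul_apply, Fin.sum_univ_three, uu]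
    linear_combination (kD/2*(z t 0^2+z t 1^2+z t 2^2)) * hq
  have df : HasDerivAt (fun t => f (uu (z t))) (g (uu (z t)) / (4 * kD) * (-2 * kD * uu (z t))) t :=
    (hf _).comp t du
  have dg : HasDerivAt (fun t => g (uu (z t))) (g' * (-2 * kD * uu (z t))) t := hg'.comp t du
  refine HasDerivAt.congr_deriv ((((df.pow 2).mul dτ).add ((df.mul dg).mul dm)).add ((dg.pow 2).mul dn)) ?_
  have e1 : g (uu (z t)) / (4 * kD) * (-2 * kD * uu (z t)) = - (1/2) * g (uu (z t)) * uu (z t) := by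
    field_simp; ring
  have e2 : g' * (-2 * kD * uu (z t)) = f (uu (z t)) / 2 + (kD + kP) * g (uu (z t)) := by
    rw [← hgo]; ring
  simp only [Pi.pow_apply, Pi.mul_apply]
  rw [e1, e2, WW]
  rw [show tau (E t) = a^2 by rw [hEq, tau_rotq hq],
    show mm (E t) (z t) = 2 * a * σ by rw [hEq, mm_rotq],
    show nn (E t) (z t) = σ^2 by rw [hEq, nn_rotq hq]]
  rw [had, hσd]
  push_cast
  ring

theorem tau_bounds {E : M3} (hE : E ∈ SO3) : 0 ≤ tau E ∧ tau E ≤ 1 := by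
  obtain ⟨a, b, c, d, hq, rfl⟩ := SO3_quat hE
  rw [tau_rotq hq]
  constructor <;> nlinarith [sq_nonneg a, sq_nonneg b, sq_nonneg c, sq_nonneg d]

theorem WW_nonneg {f g : ℝ → ℝ} {E : M3} (hE : E ∈ SO3) (z : V3) : 0 ≤ WW f g E z := by
  obtain ⟨a, b, c, d, hq, rfl⟩ := SO3_quat hE
  rw [WW_rotq hq]
  positivity

theorem uu_nonneg (z : V3) : 0 ≤ uu z := by
  unfold uu; nlinarith [sq_nonneg (z 0), sq_nonneg (z 1), sq_nonneg (z 2)]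

def rho (f g : ℝ → ℝ) (u : ℝ) : ℝ :=
  |f u ^ 2 - 1| + 2 * (|f u * g u| * Real.sqrt u) + g u ^ 2 * u

theorem WW_sub_tau {f g : ℝ → ℝ} {E : M3} (hE : E ∈ SO3) (z : V3) :
    |WW f g E z - tau E| ≤ rho f g (uu z) := by
  obtain ⟨a, b, c, d, hq, rfl⟩ := SO3_quat hE
  rw [WW_rotq hq, tau_rotq hq]
  set σ := b * z 0 + c * z 1 + d * z 2 with hσ
  have h1 : σ ^ 2 ≤ uu z := by
    have : (b^2+c^2+d^2) * uu z - σ^2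
      = (b * z 1 - c * z 0)^2 + (b * z 2 - d * z 0)^2 + (c * z 2 - d * z 1)^2 := by
      rw [hσ, uu]; ring
    nlinarith [sq_nonneg (b * z 1 - c * z 0), sq_nonneg (b * z 2 - d * z 0),
      sq_nonneg (c * z 2 - d * z 1), uu_nonneg z, mul_nonneg (sq_nonneg a) (uu_nonneg z)]
  have h2 : |σ| ≤ Real.sqrt (uu z) := Real.abs_le_sqrt h1
  have ha2 : a ^ 2 ≤ 1 := by nlinarith [sq_nonneg b, sq_nonneg c, sq_nonneg d]
  have ha : |a| ≤ 1 := by rwa [← sq_le_one_iff_abs_le_one]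
  set F := f (uu z)
  set G := g (uu z)
  have e : (F * a + G * σ) ^ 2 - a ^ 2
    = (F ^ 2 - 1) * a ^ 2 + 2 * ((F * G) * (a * σ)) + G ^ 2 * σ ^ 2 := by ring
  rw [e, rho]
  refine (abs_add_le _ _).trans (add_le_add ((abs_add_le _ _).trans (add_le_add ?_ ?_)) ?_)
  · rw [abs_mul, abs_of_nonneg (sq_nonneg a)]
    exact mul_le_of_le_one_right (abs_nonneg _) ha2
  · rw [abs_mul, abs_two, abs_mul, abs_mul a]
    have : |a| * |σ| ≤ Real.sqrt (uu z) :=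
      (mul_le_of_le_one_left (abs_nonneg _) ha).trans h2
    gcongr
  · rw [abs_of_nonneg (by positivity)]
    gcongr

theorem rho_tendsto {f g : ℝ → ℝ} (hf : Continuous f) (hg : Continuous g) (hf0 : f 0 = 1) :
    Tendsto (rho f g) (𝓝 0) (𝓝 0) := by
  have : Continuous (rho f g) := by unfold rho; fun_prop
  have h := this.tendsto 0
  simpa [rho, hf0] using h

theorem conv_aux {kP : ℝ} (hkP : 0 < kP) {w τ : ℝ → ℝ}
    (hw : ∀ t, 0 ≤ t → HasDerivAt w (2 * kP * (1 - τ t) * w t) t)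
    (hmono : MonotoneOn w (Set.Ici 0))
    (hw0 : 0 < w 0) (hlim : Tendsto (fun t => w t - τ t) atTop (𝓝 0))
    {ε : ℝ} (hε : 0 < ε) : ∀ᶠ t in atTop, 1 - τ t < ε := by
  by_contra hcon
  rw [Filter.not_eventually] at hcon
  have hl : ∀ δ > 0, ∀ᶠ t in atTop, |w t - τ t| < δ := fun δ hδ => by
    have := hlim.eventually (Metric.ball_mem_nhds (0:ℝ) hδ)
    simpa using this
  have hle : ∀ t, 0 ≤ t → w t ≤ 1 - ε / 2 := by
    intro t ht
    obtain ⟨s, hs, hs1, hs2⟩ := (hcon.and_eventually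
      ((hl (ε / 2) (by positivity)).and (eventually_ge_atTop t))).exists
    have := hmono (show t ∈ Set.Ici 0 from ht) (show s ∈ Set.Ici 0 from ht.trans hs2) hs2
    have := (abs_lt.1 hs1).2
    push Not at hs
    linarith
  obtain ⟨T, hT⟩ := eventually_atTop.1 ((hl (ε / 4) (by positivity)).and (eventually_ge_atTop 0))
  have hT0 : 0 ≤ T := (hT T le_rfl).2
  set κ := 2 * kP * (ε / 4) * w 0 with hκ
  have hκ0 : 0 < κ := by positivity
  have hgrow : MonotoneOn (fun t => w t - κ * t) (Set.Ici T) := by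
    have hd : ∀ t, 0 ≤ t → HasDerivAt (fun t => w t - κ * t)
        (2 * kP * (1 - τ t) * w t - κ * 1) t := fun t ht =>
      (hw t ht).sub ((hasDerivAt_id t).const_mul κ)
    refine monotoneOn_of_deriv_nonneg (convex_Ici T)
      (fun t ht => (hd t (hT0.trans ht)).continuousAt.continuousWithinAt)
      (fun t ht => ?_) (fun t ht => ?_)
    · rw [interior_Ici] at ht
      exact (hd t (hT0.trans ht.le)).differentiableAt.differentiableWithinAt
    · rw [interior_Ici] at ht
      have ht' : T ≤ t := ht.le
      have ht0 := hT0.trans ht'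
      rw [(hd t ht0).deriv]
      have h1 := (abs_lt.1 (hT t ht').1).1
      have h2 := hle t ht0
      have h3 : w 0 ≤ w t := hmono (Set.mem_Ici.2 (le_refl (0:ℝ))) ht0 ht0
      have h4 : ε / 4 ≤ 1 - τ t := by linarith
      have : κ ≤ 2 * kP * (1 - τ t) * w t := by
        have h5 : 0 ≤ 2 * kP * (1 - τ t) := mul_nonneg (by positivity) (by linarith)
        rw [hκ]; gcongr
      linarith
  have h5 := hgrow (Set.mem_Ici.2 (le_refl T))
    (show T + 1 / κ ∈ Set.Ici T by simp [hκ0.le]) (by simp [hκ0.le])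
  have h6 := hle (T + 1 / κ) (by positivity)
  have h7 : w 0 ≤ w T := hmono (Set.mem_Ici.2 (le_refl (0:ℝ))) hT0 hT0
  have h8 : κ * (T + 1 / κ) = κ * T + 1 := by field_simp
  simp only [h8] at h5
  linarith

theorem H_pos {kP kD : ℝ} {f g : ℝ → ℝ} (hkP : 0 < kP) (hkD : 0 < kD) (hf0 : f 0 = 1)
    (hf : ∀ u, HasDerivAt f (g u / (4 * kD)) u)
    (hg : ∀ u, ∃ g', HasDerivAt g g' u ∧ -2 * kD * u * g' = f u / 2 + (kD + kP) * g u)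
    {u : ℝ} (hu : 0 ≤ u) : f u ^ 2 + g u ^ 2 * u ≠ 0 := by
  intro hH
  set v : ℝ → ℝ := fun t => u * Real.exp (-2 * kD * t) with hv
  have hcf : Continuous f := continuous_iff_continuousAt.2 fun u => (hf u).continuousAt
  have hcg : Continuous g := continuous_iff_continuousAt.2 fun u => by
    obtain ⟨g', h, -⟩ := hg u; exact h.continuousAt
  have dv : ∀ t, HasDerivAt v (-2 * kD * v t) t := fun t => by
    have := (((hasDerivAt_id t).const_mul (-2 * kD)).exp).const_mul u
    refine this.congr_deriv ?_
    simp only [hv, id]; ring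
  set φ : ℝ → ℝ := fun t => Real.exp (-2 * kP * t) * (f (v t) ^ 2 + g (v t) ^ 2 * v t) with hφ
  have dφ : ∀ t, HasDerivAt φ (-2 * kP * Real.exp (-2 * kP * t) * f (v t) ^ 2) t := fun t => by
    obtain ⟨g', hg', hgo⟩ := hg (v t)
    have df : HasDerivAt (fun t => f (v t)) (g (v t) / (4 * kD) * (-2 * kD * v t)) t :=
      (hf _).comp t (dv t)
    have dg : HasDerivAt (fun t => g (v t)) (g' * (-2 * kD * v t)) t := hg'.comp t (dv t)
    have de := ((hasDerivAt_id t).const_mul (-2 * kP)).exp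
    refine (de.mul ((df.pow 2).add ((dg.pow 2).mul (dv t)))).congr_deriv ?_
    have e1 : g (v t) / (4 * kD) * (-2 * kD * v t) = - (1/2) * g (v t) * v t := by
      field_simp; ring
    have e2 : g' * (-2 * kD * v t) = f (v t) / 2 + (kD + kP) * g (v t) := by
      rw [← hgo]; ring
    rw [e1, e2]
    simp only [Pi.pow_apply, Pi.add_apply, Pi.mul_apply, id]
    push_cast
    ring
  have hanti : Antitone φ := antitone_of_deriv_nonpos (fun t => (dφ t).differentiableAt)
    (fun t => by
      rw [(dφ t).deriv]
      have := Real.exp_pos (-2 * kP * t)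
      have : 0 ≤ kP * Real.exp (-2 * kP * t) * f (v t) ^ 2 := by positivity
      linarith)
  have hφ0 : φ 0 = 0 := by simp [hφ, hv, hH]
  have hz : ∀ t, 0 ≤ t → f (v t) ^ 2 + g (v t) ^ 2 * v t = 0 := fun t ht => by
    have h1 : φ t ≤ 0 := hφ0 ▸ hanti ht
    have h2 : 0 ≤ v t := by positivity
    have h3 : 0 ≤ f (v t) ^ 2 + g (v t) ^ 2 * v t := by positivity
    have h4 := Real.exp_pos (-2 * kP * t)
    by_contra hne
    have : 0 < φ t := mul_pos h4 (lt_of_le_of_ne h3 (Ne.symm hne))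
    linarith
  have hvl : Tendsto v atTop (𝓝 0) := by
    have : Tendsto (fun t : ℝ => -2 * kD * t) atTop atBot :=
      tendsto_id.const_mul_atTop_of_neg (by linarith)
    have h := (Real.tendsto_exp_atBot.comp this).const_mul u
    rw [mul_zero] at h
    exact h
  have hc : Continuous fun x => f x ^ 2 + g x ^ 2 * x := by fun_prop
  have hl := (hc.tendsto 0).comp hvl
  have hl0 : Tendsto ((fun x => f x ^ 2 + g x ^ 2 * x) ∘ v) atTop (𝓝 0) :=
    tendsto_const_nhds.congr' (by
      filter_upwards [eventually_ge_atTop 0] with t ht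
      exact (hz t ht).symm)
  have := tendsto_nhds_unique hl hl0
  simp [hf0] at this

theorem cont_veeskew : Continuous fun E : M3 => vee (skewPart E) := by
  refine continuous_pi fun i => ?_
  fin_cases i <;> simp [vee, skewPart] <;> fun_prop

theorem entry_bound {E : M3} (hE : E ∈ SO3) (i j : Fin 3) :
    (E i j - (1 : M3) i j) ^ 2 ≤ 8 * (1 - tau E) := by
  have r00 := SO3_rows hE 0 0
  have r11 := SO3_rows hE 1 1
  have r22 := SO3_rows hE 2 2
  simp at r00 r11 r22
  unfold tau
  fin_cases i <;> fin_cases j <;> simp <;>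
    nlinarith [sq_nonneg (E 0 0 - 1), sq_nonneg (E 1 1 - 1), sq_nonneg (E 2 2 - 1),
      sq_nonneg (E 0 1), sq_nonneg (E 0 2), sq_nonneg (E 1 0), sq_nonneg (E 1 2),
      sq_nonneg (E 2 0), sq_nonneg (E 2 1)]

theorem uu_ge (z : V3) (i : Fin 3) : z i ^ 2 ≤ uu z := by
  unfold uu
  fin_cases i <;> simp <;> nlinarith [sq_nonneg (z 0), sq_nonneg (z 1), sq_nonneg (z 2)]

theorem recon {kP : ℝ} {Rd : M3} (hRd : Rd ∈ SO3) {U : Set (M3 × V3)}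
    (hU : U ∈ 𝓝 ((Rd, 0) : M3 × V3)) :
    ∃ δ > 0, ∀ R ∈ SO3, ∀ ω, 1 - tau (Rdᵀ * R) < δ → uu (zvec kP Rd R ω) < δ → (R, ω) ∈ U := by
  set F : M3 × V3 → ℝ × ℝ := fun p => (tau (Rdᵀ * p.1), uu (zvec kP Rd p.1 p.2)) with hF
  set l : Filter (M3 × V3) := comap F (𝓝 (1, 0)) ⊓ 𝓟 {p | p.1 ∈ SO3} with hl
  have hFl : Tendsto F l (𝓝 (1, 0)) := tendsto_comap.mono_left inf_le_left
  have hS : ∀ᶠ p in l, p.1 ∈ SO3 := mem_inf_of_right (mem_principal_self _)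
  have hτ : Tendsto (fun p : M3 × V3 => tau (Rdᵀ * p.1)) l (𝓝 1) :=
    (continuous_fst.tendsto _).comp hFl
  have hu : Tendsto (fun p : M3 × V3 => uu (zvec kP Rd p.1 p.2)) l (𝓝 0) :=
    (continuous_snd.tendsto ((1 : ℝ), (0 : ℝ))).comp hFl
  have hE : Tendsto (fun p : M3 × V3 => Rdᵀ * p.1) l (𝓝 1) := by
    refine tendsto_pi_nhds.2 fun i => tendsto_pi_nhds.2 fun j => ?_
    rw [tendsto_iff_norm_sub_tendsto_zero]
    have h1 : Tendsto (fun p : M3 × V3 => Real.sqrt (8 * (1 - tau (Rdᵀ * p.1)))) l (𝓝 0) := by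
      have : Continuous fun x : ℝ => Real.sqrt (8 * (1 - x)) := by fun_prop
      have h := (this.tendsto 1).comp hτ
      rw [sub_self, mul_zero, Real.sqrt_zero] at h
      exact h
    refine squeeze_zero' (Eventually.of_forall fun p => norm_nonneg _) ?_ h1
    filter_upwards [hS] with p hp
    exact Real.abs_le_sqrt (entry_bound (SO3_mul (SO3_transpose hRd) hp) i j)
  have hz : Tendsto (fun p : M3 × V3 => zvec kP Rd p.1 p.2) l (𝓝 0) := by
    refine tendsto_pi_nhds.2 fun i => ?_
    rw [tendsto_iff_norm_sub_tendsto_zero]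
    have h1 : Tendsto (fun p : M3 × V3 => Real.sqrt (uu (zvec kP Rd p.1 p.2))) l (𝓝 0) := by
      have h := (Real.continuous_sqrt.tendsto 0).comp hu
      rw [Real.sqrt_zero] at h
      exact h
    refine squeeze_zero (fun p => norm_nonneg _) (fun p => ?_) h1
    simp only [Pi.zero_apply, sub_zero]
    exact Real.abs_le_sqrt (uu_ge _ i)
  have hc : Continuous fun p : M3 × V3 =>
      (Rd * p.1, (Rd * p.1) *ᵥ (p.2 - kP • vee (skewPart p.1))) := by
    have h1 : Continuous fun p : M3 × V3 => Rd * p.1 := continuous_const.matrix_mul continuous_fst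
    refine h1.prodMk (h1.matrix_mulVec (continuous_snd.sub ?_))
    exact (cont_veeskew.comp continuous_fst).const_smul kP
  have h2 := (hc.tendsto (1, 0)).comp (hE.prodMk_nhds hz)
  have h0 : vee (skewPart (1 : M3)) = 0 := by
    ext i; fin_cases i <;> simp [vee, skewPart]
  simp only [Matrix.mul_one, h0, smul_zero, sub_zero, Matrix.mulVec_zero] at h2
  have h3 : ∀ᶠ p in l, p ∈ U := by
    filter_upwards [h2.eventually hU, hS] with p hp hpS
    have e1 : Rd * (Rdᵀ * p.1) = p.1 := by
      rw [← Matrix.mul_assoc, SO3_mul_transpose hRd, Matrix.one_mul]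
    have e2 : p.1 *ᵥ (zvec kP Rd p.1 p.2 - kP • vee (skewPart (Rdᵀ * p.1))) = p.2 := by
      simp [zvec, Matrix.mulVec_mulVec, SO3_mul_transpose hpS]
    have hp' : (Rd * (Rdᵀ * p.1), (Rd * (Rdᵀ * p.1)) *ᵥ
      (zvec kP Rd p.1 p.2 - kP • vee (skewPart (Rdᵀ * p.1)))) ∈ U := hp
    rw [e1, e2] at hp'
    exact hp'
  rw [hl, eventually_inf_principal, eventually_comap] at h3
  obtain ⟨δ, hδ, hb⟩ := Metric.eventually_nhds_iff.1 h3
  refine ⟨δ, hδ, fun R hR ω h1 h2 => ?_⟩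
  refine hb (y := F (R, ω)) ?_ (R, ω) rfl hR
  rw [Prod.dist_eq, max_lt_iff, Real.dist_eq, Real.dist_eq]
  have := tau_bounds (SO3_mul (SO3_transpose hRd) hR)
  have := uu_nonneg (zvec kP Rd R ω)
  simp only [hF]
  constructor <;> rw [abs_lt] <;> constructor <;> linarith

local instance instBorelM3 : BorelSpace M3 :=
  (inferInstance : BorelSpace (Fin 3 → Fin 3 → ℝ))

local instance instSCM3 : SecondCountableTopology M3 :=
  (inferInstance : SecondCountableTopology (Fin 3 → Fin 3 → ℝ))

theorem isClosed_SO3 : IsClosed SO3 := by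
  have h1 : IsClosed {R : M3 | Rᵀ * R = 1} :=
    isClosed_eq (continuous_id.matrix_transpose.matrix_mul continuous_id) continuous_const
  have h2 : IsClosed {R : M3 | R.det = 1} := isClosed_eq continuous_id.matrix_det continuous_const
  exact h1.inter h2

theorem cont_WW {f g : ℝ → ℝ} (hf : Continuous f) (hg : Continuous g) :
    Continuous fun p : M3 × V3 => WW f g p.1 p.2 := by
  have hu : Continuous fun p : M3 × V3 => uu p.2 := by unfold uu; fun_prop
  have e : ∀ i j, Continuous fun p : M3 × V3 => p.1 i j := fun i j =>
    continuous_fst.matrix_elem i j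
  have ht : Continuous fun p : M3 × V3 => tau p.1 := by
    unfold tau
    exact ((((continuous_const.add (e 0 0)).add (e 1 1)).add (e 2 2)).div_const 4)
  have hv : ∀ i, Continuous fun p : M3 × V3 => vee (skewPart p.1) i := fun i =>
    (continuous_apply i).comp (cont_veeskew.comp continuous_fst)
  have hm : Continuous fun p : M3 × V3 => mm p.1 p.2 := by
    unfold mm
    have := hv 0
    have := hv 1
    have := hv 2
    fun_prop
  have hn : Continuous fun p : M3 × V3 => nn p.1 p.2 := by
    unfold nn
    have := e 0 0
    have := e 0 1
    have := e 0 2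
    have := e 1 0
    have := e 1 1
    have := e 1 2
    have := e 2 0
    have := e 2 1
    have := e 2 2
    fun_prop
  have hfu := hf.comp hu
  have hgu := hg.comp hu
  exact (((hfu.pow 2).mul ht).add ((hfu.mul hgu).mul hm)).add ((hgu.pow 2).mul hn)

theorem cont_zvec (kP : ℝ) (Rd : M3) : Continuous fun p : M3 × V3 => zvec kP Rd p.1 p.2 := by
  unfold zvec
  exact (continuous_fst.matrix_transpose.matrix_mulVec continuous_snd).add
    ((cont_veeskew.comp (continuous_const.matrix_mul continuous_fst)).const_smul kP)

theorem cubic_card {c0 c1 c2 c3 : ℝ} (h : c0^2+c1^2+c2^2+c3^2 ≠ 0) (s : Finset ℕ)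
    (hs : ∀ t ∈ s, c0 + c1 * (t:ℝ) + c2 * (t:ℝ)^2 + c3 * (t:ℝ)^3 = 0) : s.card ≤ 3 := by
  classical
  open Polynomial in
  set p : ℝ[X] := C c0 + C c1 * X + C c2 * X^2 + C c3 * X^3 with hp
  have hdeg : p.natDegree ≤ 3 := by rw [hp]; compute_degree
  have hp0 : p ≠ 0 := by
    intro h0
    apply h
    have e0 : p.coeff 0 = 0 := by rw [h0]; simp
    have e1 : p.coeff 1 = 0 := by rw [h0]; simp
    have e2 : p.coeff 2 = 0 := by rw [h0]; simp
    have e3 : p.coeff 3 = 0 := by rw [h0]; simp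
    simp [hp, Polynomial.coeff_X, Polynomial.coeff_C, Polynomial.coeff_X_pow] at e0 e1 e2 e3
    simp [e0, e1, e2, e3]
  calc s.card ≤ p.roots.toFinset.card := by
        refine Finset.card_le_card_of_injOn (fun t : ℕ => (t : ℝ)) (fun t ht => ?_)
          (fun a _ b _ hab => Nat.cast_injective (R := ℝ) hab)
        have := hs t ht
        simp [hp, Polynomial.IsRoot]
        exact ⟨by rw [← hp]; exact hp0, this⟩
    _ ≤ p.roots.card := Multiset.toFinset_card_le _
    _ ≤ p.natDegree := p.card_roots'
    _ ≤ 3 := hdeg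

theorem haar_null {f g : ℝ → ℝ} (hf : Continuous f) (hg : Continuous g) {Rd : M3} (hRd : Rd ∈ SO3)
    (z : V3) (hH : f (uu z) ^ 2 + g (uu z) ^ 2 * uu z ≠ 0) {μ : Measure M3}
    (hμ : IsHaarOnSO3 μ) : μ {R | R ∈ SO3 ∧ WW f g (Rdᵀ * R) z = 0} = 0 := by
  classical
  set G : Set M3 := {R | R ∈ SO3 ∧ WW f g (Rdᵀ * R) z = 0} with hG
  have hGc : IsClosed G := by
    refine isClosed_SO3.inter (isClosed_eq ?_ continuous_const)
    exact (cont_WW hf hg).comp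
      ((continuous_const.matrix_mul continuous_id).prodMk continuous_const)
  have hμ1 : μ Set.univ ≤ 1 := by
    rw [← Set.union_compl_self SO3]
    refine (measure_union_le _ _).trans ?_
    rw [hμ.1, hμ.2.1, add_zero]
  set s : ℕ → ℝ := fun t => Real.sqrt (1 + (t:ℝ)^2 + (t:ℝ)^4 + (t:ℝ)^6) with hs
  have hs0 : ∀ t, 0 < s t := fun t => Real.sqrt_pos.2 (by positivity)
  have hs2 : ∀ t, s t ^ 2 = 1 + (t:ℝ)^2 + (t:ℝ)^4 + (t:ℝ)^6 := fun t =>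
    Real.sq_sqrt (by positivity)
  have hv1 : ∀ t : ℕ, (1 / s t)^2 + ((t:ℝ) / s t)^2 + ((t:ℝ)^2 / s t)^2 + ((t:ℝ)^3 / s t)^2 = 1 := by
    intro t
    have := (hs0 t).ne'
    field_simp
    rw [hs2]
  set V : ℕ → M3 := fun t => rotq (1 / s t) ((t:ℝ) / s t) ((t:ℝ)^2 / s t) ((t:ℝ)^3 / s t) with hV
  have hVm : ∀ t, V t ∈ SO3 := fun t => rotq_mem (hv1 t)
  set Q : ℕ → M3 := fun t => Rd * V t * Rdᵀ with hQ
  have hQm : ∀ t, Q t ∈ SO3 := fun t => SO3_mul (SO3_mul hRd (hVm t)) (SO3_transpose hRd)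
  set A : ℕ → Set M3 := fun t => (fun R => Q t * R) ⁻¹' G with hA
  have hAμ : ∀ t, μ (A t) = μ G := fun t => hμ.2.2 (Q t) (hQm t) G hGc.measurableSet
  have hAm : ∀ t, MeasurableSet (A t) := fun t =>
    (hGc.preimage (continuous_const.matrix_mul continuous_id)).measurableSet
  have hcard : ∀ (n : ℕ) (R : M3), ((Finset.range n).filter fun t => R ∈ A t).card ≤ 3 := by
    intro n R
    by_cases hR : R ∈ SO3
    · obtain ⟨x, y, p, w, hq, hE⟩ := SO3_quat (SO3_mul (SO3_transpose hRd) hR)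
      set F := f (uu z)
      set K := g (uu z)
      refine cubic_card (c0 := F * x + K * (y * z 0 + p * z 1 + w * z 2))
        (c1 := -F * y + K * (x * z 0 - w * z 1 + p * z 2))
        (c2 := -F * p + K * (w * z 0 + x * z 1 - y * z 2))
        (c3 := -F * w + K * (-p * z 0 + y * z 1 + x * z 2)) ?_ _ ?_
      · have : (F * x + K * (y * z 0 + p * z 1 + w * z 2))^2
          + (-F * y + K * (x * z 0 - w * z 1 + p * z 2))^2
          + (-F * p + K * (w * z 0 + x * z 1 - y * z 2))^2
          + (-F * w + K * (-p * z 0 + y * z 1 + x * z 2))^2 = F^2 + K^2 * uu z := by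
          unfold uu
          linear_combination (F^2 + K^2 * (z 0 * z 0 + z 1 * z 1 + z 2 * z 2)) * hq
        rw [this]; exact hH
      · intro t ht
        have h1 : WW f g (Rdᵀ * (Q t * R)) z = 0 := (Finset.mem_filter.1 ht).2.2
        have h2 : Rdᵀ * (Q t * R) = V t * (Rdᵀ * R) := by
          simp only [hQ]
          rw [← Matrix.mul_assoc, ← Matrix.mul_assoc, ← Matrix.mul_assoc, hRd.1, Matrix.one_mul,
            Matrix.mul_assoc]
        rw [h2, hE, hV, rotq_mul, WW_rotq, sq_eq_zero_iff] at h1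
        · have hst := (hs0 t).ne'
          have h3 := congrArg (fun v => s t * v) h1
          simp only [mul_zero] at h3
          rw [← h3]
          field_simp
          ring
        · linear_combination (x^2+y^2+p^2+w^2) * hv1 t + hq
    · have : ((Finset.range n).filter fun t => R ∈ A t) = ∅ := by
        refine Finset.filter_eq_empty_iff.2 fun t _ hmem => hR ?_
        have h1 : Q t * R ∈ SO3 := hmem.1
        have h2 := SO3_mul (SO3_transpose (hQm t)) h1
        rwa [← Matrix.mul_assoc, (hQm t).1, Matrix.one_mul] at h2
      rw [this]; simp
  have hn : ∀ n : ℕ, (n : ENNReal) * μ G ≤ 3 := by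
    intro n
    calc (n : ENNReal) * μ G = ∑ t ∈ Finset.range n, μ (A t) := by
          simp [hAμ]
      _ = ∑ t ∈ Finset.range n, ∫⁻ R, (A t).indicator 1 R ∂μ := by
          refine Finset.sum_congr rfl fun t _ => ?_
          rw [lintegral_indicator_one (hAm t)]
      _ = ∫⁻ R, ∑ t ∈ Finset.range n, (A t).indicator 1 R ∂μ := by
          rw [lintegral_finsetSum]
          intro t _
          exact measurable_one.indicator (hAm t)
      _ ≤ ∫⁻ R, 3 ∂μ := by
          refine lintegral_mono fun R => ?_
          have : ∑ t ∈ Finset.range n, (A t).indicator (1 : M3 → ENNReal) R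
              = (((Finset.range n).filter fun t => R ∈ A t).card : ENNReal) := by
            rw [Finset.card_filter]
            push_cast
            refine Finset.sum_congr rfl fun t _ => ?_
            simp [Set.indicator_apply]
          simp only [this]
          exact_mod_cast hcard n R
      _ ≤ 3 := by
          rw [lintegral_const]
          calc 3 * μ Set.univ ≤ 3 * 1 := by gcongr
            _ = 3 := mul_one _
  by_contra hne
  obtain ⟨n, hn'⟩ := ENNReal.exists_nat_mul_gt hne (b := 3) (by simp)
  exact absurd (hn n) (not_le.2 hn')

theorem w_deriv {kP kD : ℝ} {f g : ℝ → ℝ} (hkD : 0 < kD)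
    (hf : ∀ u, HasDerivAt f (g u / (4 * kD)) u)
    (hg : ∀ u, ∃ g', HasDerivAt g g' u ∧ -2 * kD * u * g' = f u / 2 + (kD + kP) * g u)
    {Rd : M3} (hRd : Rd ∈ SO3) {R : ℝ → M3} {ω : ℝ → V3}
    (h : IsClosedLoopSolution kP kD Rd R ω) (h0 : R 0 ∈ SO3) {t : ℝ} (ht : 0 ≤ t) :
    HasDerivAt (fun t => WW f g (Rdᵀ * R t) (zvec kP Rd (R t) (ω t)))
      (2 * kP * (1 - tau (Rdᵀ * R t)) * WW f g (Rdᵀ * R t) (zvec kP Rd (R t) (ω t))) t := by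
  refine WW_deriv (E := fun t => Rdᵀ * R t) (z := fun t => zvec kP Rd (R t) (ω t)) hkD hf hg
    (SO3_mul (SO3_transpose hRd) (sol_SO3 h h0 ht)) (fun i j => ?_) (fun i => z_entry h h0 ht i)
  have e : zvec kP Rd (R t) (ω t) - kP • vee (skewPart (Rdᵀ * R t)) = (R t)ᵀ *ᵥ ω t := by
    simp [zvec]
  simp only [e]
  exact E_entry h h0 ht i j

theorem w_mono {kP kD : ℝ} {f g : ℝ → ℝ} (hkP : 0 < kP) (hkD : 0 < kD)
    (hf : ∀ u, HasDerivAt f (g u / (4 * kD)) u)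
    (hg : ∀ u, ∃ g', HasDerivAt g g' u ∧ -2 * kD * u * g' = f u / 2 + (kD + kP) * g u)
    {Rd : M3} (hRd : Rd ∈ SO3) {R : ℝ → M3} {ω : ℝ → V3}
    (h : IsClosedLoopSolution kP kD Rd R ω) (h0 : R 0 ∈ SO3) :
    MonotoneOn (fun t => WW f g (Rdᵀ * R t) (zvec kP Rd (R t) (ω t))) (Set.Ici 0) := by
  have hd := fun t (ht : 0 ≤ t) => w_deriv hkD hf hg hRd h h0 ht
  refine monotoneOn_of_deriv_nonneg (convex_Ici 0)
    (fun t ht => (hd t ht).continuousAt.continuousWithinAt) (fun t ht => ?_) (fun t ht => ?_)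
  · rw [interior_Ici] at ht
    exact (hd t (le_of_lt ht)).differentiableAt.differentiableWithinAt
  · rw [interior_Ici] at ht
    have ht' : 0 ≤ t := le_of_lt ht
    rw [(hd t ht').deriv]
    have hE := SO3_mul (SO3_transpose hRd) (sol_SO3 h h0 ht')
    have h1 := (tau_bounds hE).2
    have h2 := WW_nonneg (f := f) (g := g) hE (zvec kP Rd (R t) (ω t))
    exact mul_nonneg (mul_nonneg (by positivity) (by linarith)) h2

theorem u_exp {kP kD : ℝ} {Rd : M3} {R : ℝ → M3} {ω : ℝ → V3}
    (h : IsClosedLoopSolution kP kD Rd R ω) (h0 : R 0 ∈ SO3) {t : ℝ} (ht : 0 ≤ t) :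
    uu (zvec kP Rd (R t) (ω t)) = Real.exp (-kD * t) ^ 2 * uu (zvec kP Rd (R 0) (ω 0)) := by
  simp only [uu, z_exp h h0 ht]
  ring

theorem null_prod {kP : ℝ} {f g : ℝ → ℝ} (hcf : Continuous f) (hcg : Continuous g)
    (hH : ∀ u, 0 ≤ u → f u ^ 2 + g u ^ 2 * u ≠ 0) {Rd : M3} (hRd : Rd ∈ SO3) {μ : Measure M3}
    (hμ : IsHaarOnSO3 μ) (hN : MeasurableSet {p : M3 × V3 | p.1 ∈ SO3 ∧
      WW f g (Rdᵀ * p.1) (zvec kP Rd p.1 p.2) = 0}) :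
    μ.prod volume {p : M3 × V3 | p.1 ∈ SO3 ∧
      WW f g (Rdᵀ * p.1) (zvec kP Rd p.1 p.2) = 0} = 0 := by
  have hfin : IsFiniteMeasure μ := by
    constructor
    rw [← Set.union_compl_self SO3]
    refine (measure_union_le _ _).trans_lt ?_
    rw [hμ.1, hμ.2.1, add_zero]
    exact ENNReal.one_lt_top
  set N' : Set (M3 × V3) := {p | p.1 ∈ SO3 ∧ WW f g (Rdᵀ * p.1) p.2 = 0} with hN'
  have hN'c : IsClosed N' := by
    refine (isClosed_SO3.preimage continuous_fst).inter (isClosed_eq ?_ continuous_const)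
    exact (cont_WW hcf hcg).comp
      ((continuous_const.matrix_mul continuous_fst).prodMk continuous_snd)
  have h0 : μ.prod volume N' = 0 := by
    rw [Measure.prod_apply_symm hN'c.measurableSet]
    rw [lintegral_eq_zero_of_ae_eq_zero]
    refine Eventually.of_forall fun z => ?_
    exact haar_null hcf hcg hRd z (hH _ (uu_nonneg z)) hμ
  rw [Measure.measure_prod_null hN'c.measurableSet] at h0
  rw [Measure.measure_prod_null hN]
  have hae : ∀ᵐ R ∂μ, R ∈ SO3 := hμ.2.1
  filter_upwards [h0, hae] with R hR hRS
  have hdet : LinearMap.det (Matrix.toLin' Rᵀ) ≠ 0 := by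
    rw [LinearMap.det_toLin', Matrix.det_transpose, hRS.2]; exact one_ne_zero
  have e : Prod.mk R ⁻¹' {p : M3 × V3 | p.1 ∈ SO3 ∧
      WW f g (Rdᵀ * p.1) (zvec kP Rd p.1 p.2) = 0}
      = (Matrix.toLin' Rᵀ) ⁻¹' ((fun x => x + kP • vee (skewPart (Rdᵀ * R))) ⁻¹'
        (Prod.mk R ⁻¹' N')) := by
    ext ω
    simp [hN', zvec]
  rw [e, Measure.addHaar_preimage_linearMap _ hdet, measure_preimage_add_right]
  simp only [Pi.zero_apply] at hR ⊢
  rw [hR, mul_zero]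

theorem interior_sub_SO3_empty {N : Set (M3 × V3)} (hN : N ⊆ SO3 ×ˢ Set.univ) : interior N = ∅ := by
  rw [Set.eq_empty_iff_forall_notMem]
  rintro ⟨R, ω⟩ hp
  have hc : Continuous fun c : ℝ => ((c • R, ω) : M3 × V3) :=
    (continuous_id.smul continuous_const).prodMk continuous_const
  have h1 : ∀ᶠ c in 𝓝 (1:ℝ), ((c • R, ω) : M3 × V3) ∈ N := by
    refine hc.continuousAt.eventually_mem ?_
    simpa using mem_interior_iff_mem_nhds.1 hp
  have hR : R ∈ SO3 := (hN (interior_subset hp)).1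
  have h2 : ∀ᶠ c in 𝓝 (1:ℝ), c = 1 := by
    filter_upwards [h1] with c hcN
    have := (hN hcN).1.2
    simp only [Matrix.det_smul, hR.2, Fintype.card_fin, mul_one] at this
    have h3 : (c - 1) * (c^2 + c + 1) = 0 := by linear_combination this
    rcases mul_eq_zero.1 h3 with h | h
    · linarith
    · nlinarith [sq_nonneg (c + 1/2)]
  obtain ⟨δ, hδ, hb⟩ := Metric.eventually_nhds_iff.1 h2
  have := hb (y := 1 + δ / 2) (by rw [Real.dist_eq, abs_lt]; constructor <;> linarith)
  linarith

/-- Quasi-global asymptotic stability of the attitude PD control law on SO(3) × ℝ³ for a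
constant desired attitude `R_d` with `ω_d = 0`. -/
theorem attitude_pd_quasi_global_asymptotic_stability
    (kP kD : ℝ) (hkP : 0 < kP) (hkD : 0 < kD)
    (Rd : M3) (hRd : Rd ∈ SO3) :
    (∀ U ∈ 𝓝 ((Rd, 0) : M3 × V3), ∃ V ∈ 𝓝 ((Rd, 0) : M3 × V3),
      ∀ (R : ℝ → M3) (ω : ℝ → V3), IsClosedLoopSolution kP kD Rd R ω →
        R 0 ∈ SO3 → (R 0, ω 0) ∈ V → ∀ t : ℝ, 0 ≤ t → (R t, ω t) ∈ U) ∧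
    (∃ N : Set (M3 × V3), N ⊆ SO3 ×ˢ Set.univ ∧ IsClosed N ∧ interior N = ∅ ∧
      (∀ μ : Measure M3, IsHaarOnSO3 μ → μ.prod volume N = 0) ∧
      ∀ (R : ℝ → M3) (ω : ℝ → V3), IsClosedLoopSolution kP kD Rd R ω →
        R 0 ∈ SO3 → (R 0, ω 0) ∉ N →
        Tendsto R atTop (𝓝 Rd) ∧ Tendsto ω atTop (𝓝 (0 : V3))) := by
  obtain ⟨f, g, hf0, hf, hg⟩ := exists_fg hkP hkD
  have hcf : Continuous f := continuous_iff_continuousAt.2 fun u => (hf u).continuousAt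
  have hcg : Continuous g := continuous_iff_continuousAt.2 fun u => by
    obtain ⟨g', h, -⟩ := hg u; exact h.continuousAt
  have hcW : Continuous fun p : M3 × V3 => WW f g (Rdᵀ * p.1) (zvec kP Rd p.1 p.2) :=
    (cont_WW hcf hcg).comp
      ((continuous_const.matrix_mul continuous_fst).prodMk (cont_zvec kP Rd))
  have hcu : Continuous fun p : M3 × V3 => uu (zvec kP Rd p.1 p.2) := by
    have h1 : Continuous uu := by unfold uu; fun_prop
    exact h1.comp (cont_zvec kP Rd)
  have hE : ∀ {R : M3}, R ∈ SO3 → Rdᵀ * R ∈ SO3 := fun hR => SO3_mul (SO3_transpose hRd) hR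
  constructor
  · intro U hU
    obtain ⟨δ, hδ, hrec⟩ := recon (kP := kP) hRd hU
    have hρ := (rho_tendsto hcf hcg hf0).eventually (gt_mem_nhds (show (0:ℝ) < δ / 2 by positivity))
    obtain ⟨δ', hδ', hρ'⟩ := Metric.eventually_nhds_iff.1 hρ
    have z0 : zvec kP Rd Rd 0 = 0 := by
      rw [zvec, hRd.1]
      ext i; fin_cases i <;> simp [vee, skewPart]
    have u0 : uu (0 : V3) = 0 := by simp [uu]
    refine ⟨{p | 1 - δ / 2 < WW f g (Rdᵀ * p.1) (zvec kP Rd p.1 p.2)} ∩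
      {p | uu (zvec kP Rd p.1 p.2) < min δ δ'}, ?_, ?_⟩
    · refine ((isOpen_lt continuous_const hcW).inter (isOpen_lt hcu continuous_const)).mem_nhds ?_
      refine ⟨?_, ?_⟩
      · simp only [Set.mem_ofPred_eq, z0, hRd.1]
        have : WW f g 1 0 = 1 := by
          simp [WW, u0, hf0, mm, nn, tau]; norm_num
        rw [this]; linarith
      · simp only [Set.mem_ofPred_eq, z0, u0]
        exact lt_min hδ hδ'
    · intro R ω h h0 hV t ht
      have hRt := sol_SO3 h h0 ht
      have hu : uu (zvec kP Rd (R t) (ω t)) < min δ δ' := by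
        refine lt_of_le_of_lt ?_ hV.2
        rw [u_exp h h0 ht]
        refine mul_le_of_le_one_left (uu_nonneg _) ?_
        refine pow_le_one₀ (Real.exp_pos _).le (Real.exp_le_one_iff.2 ?_)
        nlinarith
      have hw := w_mono hkP hkD hf hg hRd h h0 (Set.mem_Ici.2 (le_refl (0:ℝ)))
        (Set.mem_Ici.2 ht) ht
      have h1 := hV.1
      have h2 := (abs_le.1 (WW_sub_tau (f := f) (g := g) (hE hRt) (zvec kP Rd (R t) (ω t)))).2
      have h3 := hρ' (y := uu (zvec kP Rd (R t) (ω t))) (by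
        rw [Real.dist_eq, sub_zero, abs_of_nonneg (uu_nonneg _)]
        exact hu.trans_le (min_le_right _ _))
      simp only [Set.mem_ofPred_eq] at h1 hw
      exact hrec (R t) hRt (ω t) (by linarith) (hu.trans_le (min_le_left _ _))
  · set N : Set (M3 × V3) := {p | p.1 ∈ SO3 ∧ WW f g (Rdᵀ * p.1) (zvec kP Rd p.1 p.2) = 0} with hN
    have hNs : N ⊆ SO3 ×ˢ Set.univ := fun p hp => ⟨hp.1, trivial⟩
    have hNc : IsClosed N :=
      (isClosed_SO3.preimage continuous_fst).inter (isClosed_eq hcW continuous_const)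
    refine ⟨N, hNs, hNc, interior_sub_SO3_empty hNs, fun μ hμ => ?_, ?_⟩
    · exact null_prod hcf hcg (fun u hu => H_pos hkP hkD hf0 hf hg hu) hRd hμ hNc.measurableSet
    · intro R ω h h0 hnot
      have hw0 : 0 < WW f g (Rdᵀ * R 0) (zvec kP Rd (R 0) (ω 0)) :=
        lt_of_le_of_ne (WW_nonneg (hE h0) _) (fun e => hnot ⟨h0, e.symm⟩)
      have hu : Tendsto (fun t => uu (zvec kP Rd (R t) (ω t))) atTop (𝓝 0) := by
        have h1 : Tendsto (fun t : ℝ => -kD * t) atTop atBot :=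
          tendsto_id.const_mul_atTop_of_neg (by linarith)
        have h2 := (((Real.tendsto_exp_atBot.comp h1).pow 2).mul_const
          (uu (zvec kP Rd (R 0) (ω 0))))
        rw [zero_pow two_ne_zero, zero_mul] at h2
        refine h2.congr' ?_
        filter_upwards [eventually_ge_atTop 0] with t ht
        exact (u_exp h h0 ht).symm
      have hlim : Tendsto (fun t => WW f g (Rdᵀ * R t) (zvec kP Rd (R t) (ω t))
          - tau (Rdᵀ * R t)) atTop (𝓝 0) := by
        refine squeeze_zero_norm' ?_ ((rho_tendsto hcf hcg hf0).comp hu)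
        filter_upwards [eventually_ge_atTop 0] with t ht
        exact WW_sub_tau (hE (sol_SO3 h h0 ht)) _
      have hmain : Tendsto (fun t => (R t, ω t)) atTop (𝓝 ((Rd, 0) : M3 × V3)) := by
        refine tendsto_def.2 fun U hU => ?_
        obtain ⟨δ, hδ, hrec⟩ := recon (kP := kP) hRd hU
        have hτ := conv_aux (τ := fun t => tau (Rdᵀ * R t)) hkP
          (fun t ht => w_deriv hkD hf hg hRd h h0 ht)
          (w_mono hkP hkD hf hg hRd h h0) hw0 hlim hδ
        filter_upwards [hτ, hu.eventually (gt_mem_nhds hδ), eventually_ge_atTop (0:ℝ)] with t h1 h2 h3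
        exact hrec (R t) (sol_SO3 h h0 h3) (ω t) h1 h2
      exact ⟨(continuous_fst.tendsto _).comp hmain, (continuous_snd.tendsto _).comp hmain⟩
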